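/- Let 1 < p ≤ 2. Then there exist constants C7, C8 > 0, depending only on p, such that for all a, b ∈ ℝⁿ not both zero, C7 · (|a|^{2−p} + |b|^{2−p})^{−1} ≤ ∫₀¹ |λa + (1−λ)b|^{p−2} dλ ≤ C8 · (|a|^{2−p} + |b|^{2−p})^{−1}. -/

import Mathlib

/-!
Put `s = 2 - p ∈ [0, 1)`, `A = ‖a‖` and `B = ‖b‖`. The triangle inequality squeezes the norm along
the segment, `|(A + B) l - B| ≤ ‖l • a + (1 - l) • b‖ ≤ A + B`, and raising to the power `-s`
reverses both inequalities for every `l` except the zero of the minorant. The constant majorant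
gives the lower bound `(A + B) ^ (-s) ≥ (A ^ s + B ^ s)⁻¹` by subadditivity of `x ^ s`.
The power of the minorant integrates explicitly to
`(A ^ (1 - s) + B ^ (1 - s)) / ((1 - s) (A + B))`, which Chebyshev's sum inequality
`(A ^ s + B ^ s) (A ^ (1 - s) + B ^ (1 - s)) ≤ 2 (A + B)` compares with `(A ^ s + B ^ s)⁻¹`.
-/

open MeasureTheory Set

section AbsRpow

variable {r : ℝ}

lemma intervalIntegrable_abs_rpow (hr : -1 < r) (x y : ℝ) :
    IntervalIntegrable (fun u : ℝ => |u| ^ r) volume x y := by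
  refine intervalIntegrable_of_even (fun u => by rw [abs_neg]) fun c hc => ?_
  refine (intervalIntegral.intervalIntegrable_rpow' hr).congr fun u hu => ?_
  rw [uIoc_of_le hc.le] at hu
  simp only [abs_of_pos hu.1]

lemma integral_zero_abs_rpow (hr : -1 < r) {x : ℝ} (hx : 0 ≤ x) :
    ∫ u in (0 : ℝ)..x, |u| ^ r = x ^ (r + 1) / (r + 1) := by
  have abs_rpow_eq : ∫ u in (0 : ℝ)..x, |u| ^ r = ∫ u in (0 : ℝ)..x, u ^ r := by
    refine intervalIntegral.integral_congr fun u hu => ?_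
    rw [uIcc_of_le hx] at hu
    simp only [abs_of_nonneg hu.1]
  rw [abs_rpow_eq, integral_rpow (Or.inl hr), Real.zero_rpow (by linarith), sub_zero]

lemma integral_neg_abs_rpow (hr : -1 < r) {x y : ℝ} (hx : 0 ≤ x) (hy : 0 ≤ y) :
    ∫ u in (-y)..x, |u| ^ r = (x ^ (r + 1) + y ^ (r + 1)) / (r + 1) := by
  have reflect : ∫ u in (-y)..0, |u| ^ r = ∫ u in (0 : ℝ)..y, |u| ^ r := by
    simpa only [abs_neg, neg_zero] using
      (intervalIntegral.integral_comp_neg (a := 0) (b := y) fun u : ℝ => |u| ^ r).symm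
  rw [← intervalIntegral.integral_add_adjacent_intervals (intervalIntegrable_abs_rpow hr (-y) 0)
    (intervalIntegrable_abs_rpow hr 0 x), reflect, integral_zero_abs_rpow hr hx,
    integral_zero_abs_rpow hr hy]
  ring

lemma intervalIntegrable_abs_mul_sub_rpow (hr : -1 < r) (c d x y : ℝ) :
    IntervalIntegrable (fun l : ℝ => |c * l - d| ^ r) volume x y := by
  rcases eq_or_ne c 0 with rfl | hc
  · simp only [zero_mul, intervalIntegrable_const]
  · have h := ((intervalIntegrable_abs_rpow hr (c * x - d) (c * y - d)).comp_sub_right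
      d).comp_mul_left (c := c)
    simpa only [sub_add_cancel, mul_div_cancel_left₀ _ hc] using h

lemma integral_abs_add_mul_sub_rpow (hr : -1 < r) {x y : ℝ} (hx : 0 ≤ x) (hy : 0 ≤ y)
    (hxy : 0 < x + y) :
    ∫ l in (0 : ℝ)..1, |(x + y) * l - y| ^ r =
      (x ^ (r + 1) + y ^ (r + 1)) / ((r + 1) * (x + y)) := by
  rw [intervalIntegral.integral_comp_mul_sub (fun u : ℝ => |u| ^ r) hxy.ne' y, mul_zero, zero_sub,
    mul_one, add_sub_cancel_right, integral_neg_abs_rpow hr hx hy, smul_eq_mul, inv_mul_eq_div,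
    div_div]

end AbsRpow

lemma rpow_add_rpow_mul_rpow_add_rpow_le {x y s t : ℝ} (hx : 0 ≤ x) (hy : 0 ≤ y) (hs : 0 ≤ s)
    (ht : 0 ≤ t) :
    (x ^ s + y ^ s) * (x ^ t + y ^ t) ≤ 2 * (x ^ (s + t) + y ^ (s + t)) := by
  have similarly_ordered : 0 ≤ (x ^ s - y ^ s) * (x ^ t - y ^ t) := by
    rcases le_total x y with hxy | hyx
    · exact mul_nonneg_of_nonpos_of_nonpos (sub_nonpos.2 (Real.rpow_le_rpow hx hxy hs))
        (sub_nonpos.2 (Real.rpow_le_rpow hx hxy ht))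
    · exact mul_nonneg (sub_nonneg.2 (Real.rpow_le_rpow hy hyx hs))
        (sub_nonneg.2 (Real.rpow_le_rpow hy hyx ht))
  rw [Real.rpow_add_of_nonneg hx hs ht, Real.rpow_add_of_nonneg hy hs ht]
  linarith

lemma ae_abs_mul_sub_pos {c : ℝ} (hc : c ≠ 0) (d : ℝ) : ∀ᵐ l : ℝ, 0 < |c * l - d| := by
  filter_upwards [Measure.ae_ne volume (d / c)] with l hl
  refine abs_pos.2 (sub_ne_zero.2 fun h => hl ?_)
  rwa [eq_div_iff hc, mul_comm]

section Segment

variable {E : Type*} [SeminormedAddCommGroup E] [NormedSpace ℝ E] {l s : ℝ}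

lemma abs_add_mul_sub_le_norm_segment (a b : E) (hl : l ∈ Icc (0 : ℝ) 1) :
    |(‖a‖ + ‖b‖) * l - ‖b‖| ≤ ‖l • a + (1 - l) • b‖ := by
  calc |(‖a‖ + ‖b‖) * l - ‖b‖| = |‖l • a‖ - ‖-((1 - l) • b)‖| := by
        rw [norm_neg, norm_smul_of_nonneg hl.1, norm_smul_of_nonneg (sub_nonneg.2 hl.2)]
        ring_nf
    _ ≤ ‖l • a - -((1 - l) • b)‖ := abs_norm_sub_norm_le _ _
    _ = ‖l • a + (1 - l) • b‖ := by rw [sub_neg_eq_add]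

lemma norm_segment_le_add (a b : E) (hl : l ∈ Icc (0 : ℝ) 1) :
    ‖l • a + (1 - l) • b‖ ≤ ‖a‖ + ‖b‖ := by
  calc ‖l • a + (1 - l) • b‖ ≤ l * ‖a‖ + (1 - l) * ‖b‖ := by
        simpa only [norm_smul_of_nonneg hl.1, norm_smul_of_nonneg (sub_nonneg.2 hl.2)] using
          norm_add_le (l • a) ((1 - l) • b)
    _ ≤ ‖a‖ + ‖b‖ := add_le_add (mul_le_of_le_one_left (norm_nonneg a) hl.2)
        (mul_le_of_le_one_left (norm_nonneg b) (sub_le_self 1 hl.1))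

variable {a b : E}

lemma ae_add_rpow_neg_le_norm_segment_rpow_neg (hs : 0 ≤ s) (hab : 0 < ‖a‖ + ‖b‖) :
    ∀ᵐ l ∂volume.restrict (Icc (0 : ℝ) 1),
      (‖a‖ + ‖b‖) ^ (-s) ≤ ‖l • a + (1 - l) • b‖ ^ (-s) := by
  rw [ae_restrict_iff' measurableSet_Icc]
  filter_upwards [ae_abs_mul_sub_pos hab.ne' ‖b‖] with l hpos hl
  exact Real.rpow_le_rpow_of_nonpos (hpos.trans_le (abs_add_mul_sub_le_norm_segment a b hl))
    (norm_segment_le_add a b hl) (neg_nonpos.2 hs)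

lemma ae_norm_segment_rpow_neg_le_abs_rpow_neg (hs : 0 ≤ s) (hab : 0 < ‖a‖ + ‖b‖) :
    ∀ᵐ l ∂volume.restrict (Icc (0 : ℝ) 1),
      ‖l • a + (1 - l) • b‖ ^ (-s) ≤ |(‖a‖ + ‖b‖) * l - ‖b‖| ^ (-s) := by
  rw [ae_restrict_iff' measurableSet_Icc]
  filter_upwards [ae_abs_mul_sub_pos hab.ne' ‖b‖] with l hpos hl
  exact Real.rpow_le_rpow_of_nonpos hpos (abs_add_mul_sub_le_norm_segment a b hl)
    (neg_nonpos.2 hs)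

lemma intervalIntegrable_norm_segment_rpow_neg (hs : 0 ≤ s) (hs1 : s < 1)
    (hab : 0 < ‖a‖ + ‖b‖) :
    IntervalIntegrable (fun l : ℝ => ‖l • a + (1 - l) • b‖ ^ (-s)) volume 0 1 := by
  refine (intervalIntegrable_abs_mul_sub_rpow (neg_lt_neg hs1) (‖a‖ + ‖b‖) ‖b‖ 0 1).mono_fun'
    ?_ ?_
  · have hcont : Continuous fun l : ℝ => ‖l • a + (1 - l) • b‖ := by fun_prop
    exact (hcont.measurable.pow_const (-s)).aestronglyMeasurable
  · rw [uIoc_of_le zero_le_one]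
    filter_upwards [ae_restrict_of_ae_restrict_of_subset Ioc_subset_Icc_self
      (ae_norm_segment_rpow_neg_le_abs_rpow_neg hs hab)] with l hl
    rwa [Real.norm_of_nonneg (by positivity)]

lemma inv_rpow_add_rpow_le_integral_norm_segment_rpow_neg (hs : 0 ≤ s) (hs1 : s < 1)
    (hab : 0 < ‖a‖ + ‖b‖) :
    (‖a‖ ^ s + ‖b‖ ^ s)⁻¹ ≤ ∫ l in (0 : ℝ)..1, ‖l • a + (1 - l) • b‖ ^ (-s) := by
  calc (‖a‖ ^ s + ‖b‖ ^ s)⁻¹ ≤ ((‖a‖ + ‖b‖) ^ s)⁻¹ :=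
        inv_anti₀ (Real.rpow_pos_of_pos hab s)
          (Real.rpow_add_le_add_rpow (norm_nonneg a) (norm_nonneg b) hs hs1.le)
    _ = ∫ _ in (0 : ℝ)..1, (‖a‖ + ‖b‖) ^ (-s) := by
        rw [intervalIntegral.integral_const, sub_zero, one_smul, Real.rpow_neg hab.le]
    _ ≤ ∫ l in (0 : ℝ)..1, ‖l • a + (1 - l) • b‖ ^ (-s) :=
        intervalIntegral.integral_mono_ae_restrict zero_le_one intervalIntegrable_const
          (intervalIntegrable_norm_segment_rpow_neg hs hs1 hab)
          (ae_add_rpow_neg_le_norm_segment_rpow_neg hs hab)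

lemma integral_norm_segment_rpow_neg_le_div (hs : 0 ≤ s) (hs1 : s < 1) (hab : 0 < ‖a‖ + ‖b‖) :
    ∫ l in (0 : ℝ)..1, ‖l • a + (1 - l) • b‖ ^ (-s) ≤
      (‖a‖ ^ (1 - s) + ‖b‖ ^ (1 - s)) / ((1 - s) * (‖a‖ + ‖b‖)) := by
  have hr : -1 < -s := neg_lt_neg hs1
  calc ∫ l in (0 : ℝ)..1, ‖l • a + (1 - l) • b‖ ^ (-s)
      ≤ ∫ l in (0 : ℝ)..1, |(‖a‖ + ‖b‖) * l - ‖b‖| ^ (-s) :=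
        intervalIntegral.integral_mono_ae_restrict zero_le_one
          (intervalIntegrable_norm_segment_rpow_neg hs hs1 hab)
          (intervalIntegrable_abs_mul_sub_rpow hr _ _ 0 1)
          (ae_norm_segment_rpow_neg_le_abs_rpow_neg hs hab)
    _ = (‖a‖ ^ (1 - s) + ‖b‖ ^ (1 - s)) / ((1 - s) * (‖a‖ + ‖b‖)) := by
        rw [integral_abs_add_mul_sub_rpow hr (norm_nonneg a) (norm_nonneg b) hab,
          neg_add_eq_sub]

lemma integral_norm_segment_rpow_neg_le (hs : 0 ≤ s) (hs1 : s < 1) (hab : 0 < ‖a‖ + ‖b‖) :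
    ∫ l in (0 : ℝ)..1, ‖l • a + (1 - l) • b‖ ^ (-s) ≤
      2 / (1 - s) * (‖a‖ ^ s + ‖b‖ ^ s)⁻¹ := by
  have hs1' : 0 < 1 - s := sub_pos.2 hs1
  have hsum_pos : 0 < ‖a‖ ^ s + ‖b‖ ^ s := (Real.rpow_pos_of_pos hab s).trans_le
    (Real.rpow_add_le_add_rpow (norm_nonneg a) (norm_nonneg b) hs hs1.le)
  have chebyshev : (‖a‖ ^ s + ‖b‖ ^ s) * (‖a‖ ^ (1 - s) + ‖b‖ ^ (1 - s)) ≤ 2 * (‖a‖ + ‖b‖) := by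
    simpa only [add_sub_cancel, Real.rpow_one] using
      rpow_add_rpow_mul_rpow_add_rpow_le (norm_nonneg a) (norm_nonneg b) hs hs1'.le
  calc ∫ l in (0 : ℝ)..1, ‖l • a + (1 - l) • b‖ ^ (-s)
      ≤ (‖a‖ ^ (1 - s) + ‖b‖ ^ (1 - s)) / ((1 - s) * (‖a‖ + ‖b‖)) :=
        integral_norm_segment_rpow_neg_le_div hs hs1 hab
    _ ≤ (2 * (‖a‖ + ‖b‖) / (‖a‖ ^ s + ‖b‖ ^ s)) / ((1 - s) * (‖a‖ + ‖b‖)) := by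
        gcongr
        rwa [le_div_iff₀' hsum_pos]
    _ = 2 / (1 - s) * (‖a‖ ^ s + ‖b‖ ^ s)⁻¹ := by field_simp

end Segment

theorem stmt_18_general (p : ℝ) (hp1 : 1 < p) (hp2 : p ≤ 2) :
    ∃ C7 C8 : ℝ, 0 < C7 ∧ 0 < C8 ∧
      ∀ {E : Type*} [SeminormedAddCommGroup E] [NormedSpace ℝ E] (a b : E),
        (‖a‖ ≠ 0 ∨ ‖b‖ ≠ 0) →
        C7 * (‖a‖ ^ (2 - p) + ‖b‖ ^ (2 - p))⁻¹ ≤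
          (∫ l in (0 : ℝ)..1, ‖l • a + (1 - l) • b‖ ^ (p - 2)) ∧
        (∫ l in (0 : ℝ)..1, ‖l • a + (1 - l) • b‖ ^ (p - 2)) ≤
          C8 * (‖a‖ ^ (2 - p) + ‖b‖ ^ (2 - p))⁻¹ := by
  have hs : 0 ≤ 2 - p := sub_nonneg.2 hp2
  have hs1 : 2 - p < 1 := by linarith
  refine ⟨1, 2 / (1 - (2 - p)), one_pos, div_pos two_pos (sub_pos.2 hs1), fun a b hne => ?_⟩
  have hab : 0 < ‖a‖ + ‖b‖ := by
    rcases hne with ha | hb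
    · exact add_pos_of_pos_of_nonneg ((norm_nonneg a).lt_of_ne' ha) (norm_nonneg b)
    · exact add_pos_of_nonneg_of_pos (norm_nonneg a) ((norm_nonneg b).lt_of_ne' hb)
  rw [← neg_sub 2 p, one_mul]
  exact ⟨inv_rpow_add_rpow_le_integral_norm_segment_rpow_neg hs hs1 hab,
    integral_norm_segment_rpow_neg_le hs hs1 hab⟩

/-- (nb6b): for `1 < p ≤ 2` there are constants `C7, C8 > 0` depending only on `p` such that
for all `a, b ∈ ℝⁿ` not both zero,
`C7 (|a|^(2-p)+|b|^(2-p))⁻¹ ≤ ∫₀¹ |λa+(1-λ)b|^(p-2) dλ ≤ C8 (|a|^(2-p)+|b|^(2-p))⁻¹`. -/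
theorem stmt_18 (p : ℝ) (hp1 : 1 < p) (hp2 : p ≤ 2) :
    ∃ C7 C8 : ℝ, 0 < C7 ∧ 0 < C8 ∧
      ∀ (n : ℕ) (a b : EuclideanSpace ℝ (Fin n)), (a ≠ 0 ∨ b ≠ 0) →
        C7 * (‖a‖ ^ (2 - p) + ‖b‖ ^ (2 - p))⁻¹ ≤
          (∫ l in (0 : ℝ)..1, ‖l • a + (1 - l) • b‖ ^ (p - 2)) ∧
        (∫ l in (0 : ℝ)..1, ‖l • a + (1 - l) • b‖ ^ (p - 2)) ≤
          C8 * (‖a‖ ^ (2 - p) + ‖b‖ ^ (2 - p))⁻¹ := by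
  obtain ⟨C7, C8, hC7, hC8, hbounds⟩ := stmt_18_general p hp1 hp2
  exact ⟨C7, C8, hC7, hC8, fun _ a b hne =>
    hbounds a b (hne.imp norm_ne_zero_iff.2 norm_ne_zero_iff.2)⟩
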